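/- Let ρ ∈ (−1, 1), let X and V be independent standard normal random variables, set Y = ρX + √(1 − ρ²)V and Z = XY. Then for every differentiable function f : ℝ → ℝ such that E|f(Z)|, E|Z f(Z)|, E|X² f'(Z)| and E|X² f(Z)| are all finite, one has E[Z f(Z)] = E[(1 − ρ²) X² f'(Z) + ρ X² f(Z)]. -/

import Mathlib

open MeasureTheory ProbabilityTheory

/-!
Stein's identity `E[(V - m) g(V)] = v E[g'(V)]` for `V ∼ N(m, v)` holds because
`((x - m) g(x) - v g'(x)) φ(x)` is the derivative of `-v g(x) φ(x)`, where `φ` is the density of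
`N(m, v)`; here `g φ` is integrable because `(x - m) g(x) φ(x)` is and `|x - m| ≥ 1` off a compact
set. By Fubini the identity holds conditionally on any variable `X` independent of `V`:
`E[(V - m) F(X, V)] = v E[∂₂F(X, V)]`. Since `Z = ρX² + σXV` with `σ = √(1 - ρ²)`, taking
`F(x, t) = σ x f(ρx² + σ x t)` gives `E[(Z - ρX²) f(Z)] = σ² E[X² f'(Z)]`.
-/

open scoped NNReal

section SteinIdentity

variable {E : Type*} [NormedAddCommGroup E] [NormedSpace ℝ E]

theorem integrable_of_integrable_sub_smul {μ : Measure ℝ} {g : ℝ → E} (c : ℝ)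
    (hg : LocallyIntegrable g μ) (hcg : Integrable (fun x ↦ (x - c) • g x) μ) :
    Integrable g μ := by
  refine hg.integrable_of_isBigO_cocompact (.of_bound 1 ?_) (hcg.integrableAtFilter _)
  filter_upwards [(isCompact_closedBall c 1).compl_mem_cocompact] with x hx
  have hdist : 1 ≤ ‖x - c‖ := by
    rw [Set.mem_compl_iff, mem_closedBall_iff_norm, not_le] at hx
    exact hx.le
  simpa [norm_smul] using le_mul_of_one_le_left (norm_nonneg (g x)) hdist

variable {m : ℝ} {v : ℝ≥0}

theorem integrable_gaussianReal_iff_integrable_smul {g : ℝ → E} (hv : v ≠ 0) :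
    Integrable g (gaussianReal m v) ↔ Integrable (fun x ↦ gaussianPDFReal m v x • g x) := by
  simp only [gaussianReal_of_var_ne_zero m hv, ← toReal_gaussianPDF,
    integrable_withDensity_iff_integrable_smul' (measurable_gaussianPDF m v)
      (.of_forall fun _ ↦ gaussianPDF_lt_top)]

theorem hasDerivAt_gaussianPDFReal (m : ℝ) (v : ℝ≥0) (x : ℝ) :
    HasDerivAt (gaussianPDFReal m v) (-((x - m) / v) * gaussianPDFReal m v x) x := by
  have hexponent : HasDerivAt (fun x : ℝ ↦ -(x - m) ^ 2 / (2 * v)) (-((x - m) / v)) x := by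
    refine ((((hasDerivAt_id x).sub_const m).pow 2).neg.div_const (2 * (v : ℝ))).congr_deriv ?_
    simp only [id_eq, Nat.cast_ofNat, Nat.add_one_sub_one, pow_one, mul_one, neg_div,
      mul_div_mul_left _ _ (two_ne_zero' ℝ)]
  rw [gaussianPDFReal_def]
  exact (hexponent.exp.const_mul _).congr_deriv (by ring)

theorem integral_sub_smul_gaussianReal {g g' : ℝ → E} (hg : ∀ x, HasDerivAt g (g' x) x)
    (hmul : Integrable (fun x ↦ (x - m) • g x) (gaussianReal m v))
    (hg' : Integrable g' (gaussianReal m v)) :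
    ∫ x, (x - m) • g x ∂gaussianReal m v = (v : ℝ) • ∫ x, g' x ∂gaussianReal m v := by
  obtain rfl | hv := eq_or_ne v 0
  · rw [gaussianReal_zero_var, integral_congr_ae (ae_eq_dirac _)]
    simp
  have hg_int : Integrable g (gaussianReal m v) :=
    have hcont : Continuous g := continuous_iff_continuousAt.2 fun x ↦ (hg x).continuousAt
    integrable_of_integrable_sub_smul m hcont.locallyIntegrable hmul
  have hderiv (x : ℝ) : HasDerivAt (fun x ↦ -(v : ℝ) • gaussianPDFReal m v x • g x)
      (gaussianPDFReal m v x • ((x - m) • g x - (v : ℝ) • g' x)) x := by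
    refine (((hasDerivAt_gaussianPDFReal m v x).smul (hg x)).const_smul (-(v : ℝ))).congr_deriv ?_
    have hv' : (v : ℝ) ≠ 0 := by exact_mod_cast hv
    match_scalars <;> field_simp
  have hvg' : Integrable (fun x ↦ (v : ℝ) • g' x) (gaussianReal m v) := hg'.smul (v : ℝ)
  rw [← sub_eq_zero, ← integral_smul, ← integral_sub hmul hvg',
    integral_gaussianReal_eq_integral_smul hv]
  exact integral_eq_zero_of_hasDerivAt_of_integrable hderiv
    ((integrable_gaussianReal_iff_integrable_smul hv).1 (hmul.sub hvg'))
    (((integrable_gaussianReal_iff_integrable_smul hv).1 hg_int).smul (-(v : ℝ)))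

variable {S : Type*} [MeasurableSpace S]

theorem integral_sub_smul_prod_gaussianReal {ν : Measure S} [SFinite ν] {F F' : S × ℝ → E}
    (hF : ∀ x t, HasDerivAt (fun t ↦ F (x, t)) (F' (x, t)) t)
    (hmul : Integrable (fun p ↦ (p.2 - m) • F p) (ν.prod (gaussianReal m v)))
    (hF' : Integrable F' (ν.prod (gaussianReal m v))) :
    ∫ p, (p.2 - m) • F p ∂ν.prod (gaussianReal m v)
      = (v : ℝ) • ∫ p, F' p ∂ν.prod (gaussianReal m v) := by
  rw [integral_prod _ hmul, integral_prod _ hF', ← integral_smul]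
  apply integral_congr_ae
  filter_upwards [hmul.prod_right_ae, hF'.prod_right_ae] with x hmul_x hF'_x
  exact integral_sub_smul_gaussianReal (hF x) hmul_x hF'_x

variable {Ω : Type*} [MeasurableSpace Ω] {P : Measure Ω}

theorem integral_sub_smul_of_indepFun_gaussianReal {X : Ω → S} {V : Ω → ℝ}
    (hX : AEMeasurable X P) (hV : HasLaw V (gaussianReal m v) P) (hindep : IndepFun X V P)
    {F F' : S × ℝ → E} (hF_meas : StronglyMeasurable F) (hF'_meas : StronglyMeasurable F')
    (hF : ∀ x t, HasDerivAt (fun t ↦ F (x, t)) (F' (x, t)) t)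
    (hmul : Integrable (fun ω ↦ (V ω - m) • F (X ω, V ω)) P)
    (hF' : Integrable (fun ω ↦ F' (X ω, V ω)) P) :
    ∫ ω, (V ω - m) • F (X ω, V ω) ∂P = (v : ℝ) • ∫ ω, F' (X ω, V ω) ∂P := by
  have : IsProbabilityMeasure P := hV.isProbabilityMeasure
  have hXV : HasLaw (fun ω ↦ (X ω, V ω)) ((P.map X).prod (gaussianReal m v)) P :=
    hindep.hasLaw_prod ⟨hX, rfl⟩ hV
  have hmul_meas : StronglyMeasurable fun p : S × ℝ ↦ (p.2 - m) • F p :=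
    (measurable_snd.sub_const m).stronglyMeasurable.smul hF_meas
  have hstein := integral_sub_smul_prod_gaussianReal (ν := P.map X) hF
    (by rwa [← hXV.map_eq,
      integrable_map_measure hmul_meas.aestronglyMeasurable hXV.aemeasurable])
    (by rwa [← hXV.map_eq,
      integrable_map_measure hF'_meas.aestronglyMeasurable hXV.aemeasurable])
  rwa [← hXV.integral_comp hmul_meas.aestronglyMeasurable,
    ← hXV.integral_comp hF'_meas.aestronglyMeasurable] at hstein

theorem integral_sub_smul_affine_of_indepFun_gaussianReal
    [CompleteSpace E] {X : Ω → S} {V : Ω → ℝ}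
    (hX : AEMeasurable X P) (hV : HasLaw V (gaussianReal m v) P) (hindep : IndepFun X V P)
    {a b : S → ℝ} (ha : Measurable a) (hb : Measurable b)
    {f : ℝ → E} (hf : Differentiable ℝ f)
    (hmul : Integrable (fun ω ↦ (V ω - m) • b (X ω) • f (a (X ω) + b (X ω) * V ω)) P)
    (hderiv : Integrable (fun ω ↦ b (X ω) ^ 2 • deriv f (a (X ω) + b (X ω) * V ω)) P) :
    ∫ ω, (V ω - m) • b (X ω) • f (a (X ω) + b (X ω) * V ω) ∂P
      = (v : ℝ) • ∫ ω, b (X ω) ^ 2 • deriv f (a (X ω) + b (X ω) * V ω) ∂P := by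
  have haffine : Measurable fun p : S × ℝ ↦ a p.1 + b p.1 * p.2 := by fun_prop
  have hb_fst : StronglyMeasurable fun p : S × ℝ ↦ b p.1 :=
    (hb.comp measurable_fst).stronglyMeasurable
  refine integral_sub_smul_of_indepFun_gaussianReal hX hV hindep
    (F := fun p ↦ b p.1 • f (a p.1 + b p.1 * p.2))
    (F' := fun p ↦ b p.1 ^ 2 • deriv f (a p.1 + b p.1 * p.2))
    (hb_fst.smul (hf.continuous.stronglyMeasurable.comp_measurable haffine))
    ((hb_fst.pow 2).smul ((stronglyMeasurable_deriv f).comp_measurable haffine))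
    (fun x t ↦ ?_) hmul hderiv
  have haffine_deriv : HasDerivAt (fun t ↦ a x + b x * t) (b x) t := by
    simpa using ((hasDerivAt_id t).const_mul (b x)).const_add (a x)
  refine (((hf _).hasDerivAt.scomp t haffine_deriv).const_smul (b x)).congr_deriv ?_
  rw [smul_smul, sq]

theorem product_normal_stein_identity_first_order_general
    [CompleteSpace E] (ρ σ : ℝ) {X V Z : Ω → ℝ}
    (hX : AEMeasurable X P) (hV : HasLaw V (gaussianReal 0 1) P)
    (hindep : IndepFun X V P) (hZ : ∀ ω, Z ω = X ω * (ρ * X ω + σ * V ω))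
    {f : ℝ → E} (hf : Differentiable ℝ f)
    (hZf : Integrable (fun ω ↦ Z ω • f (Z ω)) P)
    (hXf' : Integrable (fun ω ↦ X ω ^ 2 • deriv f (Z ω)) P)
    (hXf : Integrable (fun ω ↦ X ω ^ 2 • f (Z ω)) P) :
    ∫ ω, Z ω • f (Z ω) ∂P
      = ∫ ω, ((σ ^ 2 * X ω ^ 2) • deriv f (Z ω) + (ρ * X ω ^ 2) • f (Z ω)) ∂P := by
  have hZ_affine (ω : Ω) : ρ * X ω ^ 2 + σ * X ω * V ω = Z ω := by rw [hZ]; ring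
  have hρXf : Integrable (fun ω ↦ (ρ * X ω ^ 2) • f (Z ω)) P := by
    simp only [mul_smul]
    exact hXf.smul ρ
  have hσXf' : Integrable (fun ω ↦ (σ ^ 2 * X ω ^ 2) • deriv f (Z ω)) P := by
    simp only [mul_smul]
    exact hXf'.smul (σ ^ 2)
  have hV_smul (ω : Ω) : (V ω - 0) • (σ * X ω) • f (Z ω)
      = Z ω • f (Z ω) - (ρ * X ω ^ 2) • f (Z ω) := by
    rw [smul_smul, ← sub_smul, ← hZ_affine]
    congr 1
    ring
  have hstein := integral_sub_smul_affine_of_indepFun_gaussianReal hX hV hindep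
    (a := fun x ↦ ρ * x ^ 2) (b := fun x ↦ σ * x) (by fun_prop) (by fun_prop) hf
  simp only [hZ_affine, hV_smul, mul_pow, NNReal.coe_one, one_smul] at hstein
  rw [integral_add hσXf' hρXf, ← sub_eq_iff_eq_add, ← integral_sub hZf hρXf]
  exact hstein (hZf.sub hρXf) hσXf'

end SteinIdentity

/-- For `X, V` independent standard normals, `Y = ρX + √(1 − ρ²)V`, `Z = XY` and any
differentiable `f` with `E|f(Z)|`, `E|Z f(Z)|`, `E|X² f'(Z)|`, `E|X² f(Z)|` finite, one has
`E[Z f(Z)] = E[(1 − ρ²) X² f'(Z) + ρ X² f(Z)]`. -/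
theorem product_normal_stein_identity_first_order
    {Ω : Type*} [MeasurableSpace Ω] (P : Measure Ω) [IsProbabilityMeasure P]
    (ρ : ℝ) (hρ : ρ ∈ Set.Ioo (-1 : ℝ) 1)
    (X V : Ω → ℝ) (hX : Measurable X) (hV : Measurable V)
    (hXlaw : P.map X = gaussianReal 0 1) (hVlaw : P.map V = gaussianReal 0 1)
    (hindep : IndepFun X V P)
    (Y Z : Ω → ℝ)
    (hY : ∀ ω, Y ω = ρ * X ω + Real.sqrt (1 - ρ ^ 2) * V ω)
    (hZ : ∀ ω, Z ω = X ω * Y ω)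
    (f : ℝ → ℝ) (hf : Differentiable ℝ f)
    (h1 : Integrable (fun ω => f (Z ω)) P)
    (h2 : Integrable (fun ω => Z ω * f (Z ω)) P)
    (h3 : Integrable (fun ω => (X ω) ^ 2 * deriv f (Z ω)) P)
    (h4 : Integrable (fun ω => (X ω) ^ 2 * f (Z ω)) P) :
    ∫ ω, Z ω * f (Z ω) ∂P
      = ∫ ω, ((1 - ρ ^ 2) * (X ω) ^ 2 * deriv f (Z ω) + ρ * (X ω) ^ 2 * f (Z ω)) ∂P := by
  have hσ : √(1 - ρ ^ 2) ^ 2 = 1 - ρ ^ 2 :=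
    Real.sq_sqrt (sub_nonneg.2 ((sq_lt_one_iff_abs_lt_one ρ).2 (abs_lt.2 hρ)).le)
  rw [← hσ]
  exact product_normal_stein_identity_first_order_general ρ √(1 - ρ ^ 2) hX.aemeasurable
    ⟨hV.aemeasurable, hVlaw⟩ hindep (fun ω ↦ by rw [hZ, hY]) hf h2 h3 h4
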